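/- arXiv:2307.12110 — 2 statements merged into one kernel-verified Lean document; each statement's English description precedes it below -/
import Mathlib

section
/- For every k with 0 ≤ k ≤ p − 2, one has h_{k+1} = h_k if and only if c(k + 1 + h_k) = h_k. (Proposition 4.7, first equivalence.) -/
/-- The shifted h-index of order `k`: the largest `m` with `1 ≤ m ≤ p - k` and
`c (k + m) ≥ m` (the Hirsch h-index of the tail sequence `c (k+1), …, c p`).
Taken as the `sup` of the (finite) set of such `m`, which equals its maximum
when the set is nonempty and is `0` otherwise. -/
def hIdx (p : ℕ) (c : ℕ → ℕ) (k : ℕ) : ℕ :=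
  ((Finset.Icc 1 (p - k)).filter (fun m => m ≤ c (k + m))).sup id

/-- The shifted core sum `N_k = Σ_{j=k+1}^{k+h_k} c j`. -/
def coreSum (p : ℕ) (c : ℕ → ℕ) (k : ℕ) : ℕ :=
  ∑ j ∈ Finset.Icc (k + 1) (k + hIdx p c k), c j

/-- The shifted e-index `e_k = √(N_k − h_k²)`. -/
noncomputable def eIdx (p : ℕ) (c : ℕ → ℕ) (k : ℕ) : ℝ :=
  Real.sqrt ((coreSum p c k : ℝ) - (hIdx p c k : ℝ) ^ 2)

/-!
Maximality of `h_k` forces `c (k + 1 + h_k) ≤ h_k`, since otherwise `h_k + 1` would be admissible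
at shift `k`. Monotonicity of `c` gives `h_{k+1} ≤ h_k`. Each side of the equivalence therefore
says that `h_k` is still admissible at shift `k + 1`, i.e. `h_k ≤ c (k + 1 + h_k)`.
-/

section HIndex

variable {p k m : ℕ} {c : ℕ → ℕ}

theorem hIdx_le_sub : hIdx p c k ≤ p - k :=
  Finset.sup_le fun _ hm => (Finset.mem_Icc.mp (Finset.mem_filter.mp hm).1).2

theorem hIdx_le_apply : hIdx p c k ≤ c (k + hIdx p c k) :=
  Finset.sup_induction (p := fun m => m ≤ c (k + m)) (Nat.zero_le _)
    (fun a ha b hb => by rcases max_choice a b with h | h <;> simpa only [h])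
    (fun _ hm => (Finset.mem_filter.mp hm).2)

theorem le_hIdx (hmp : m ≤ p - k) (hmc : m ≤ c (k + m)) : m ≤ hIdx p c k := by
  rcases m.eq_zero_or_pos with rfl | hm
  · exact Nat.zero_le _
  · exact Finset.le_sup (f := id)
      (Finset.mem_filter.mpr ⟨Finset.mem_Icc.mpr ⟨hm, hmp⟩, hmc⟩)

theorem le_hIdx_of_eq_zero (hzero : ∀ j, p < j → c j = 0) (hmc : m ≤ c (k + m)) :
    m ≤ hIdx p c k := by
  refine le_hIdx ?_ hmc
  by_contra! hlt
  have hc : c (k + m) = 0 := hzero _ (by omega)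
  omega

theorem apply_succ_add_hIdx_le (hzero : ∀ j, p < j → c j = 0) :
    c (k + 1 + hIdx p c k) ≤ hIdx p c k := by
  by_contra! hlt
  have hsucc : hIdx p c k + 1 ≤ c (k + (hIdx p c k + 1)) := by
    rwa [← add_assoc, add_right_comm]
  exact Nat.not_succ_le_self _ (le_hIdx_of_eq_zero hzero hsucc)

theorem antitone_hIdx (hc : AntitoneOn c (Set.Ioc 0 p)) : Antitone (hIdx p c) := by
  intro k l hkl
  rcases (hIdx p c l).eq_zero_or_pos with h0 | hpos
  · exact h0.trans_le (Nat.zero_le _)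
  · have hlp : hIdx p c l ≤ p - l := hIdx_le_sub
    refine le_hIdx (hlp.trans (Nat.sub_le_sub_left hkl p)) ?_
    calc hIdx p c l ≤ c (l + hIdx p c l) := hIdx_le_apply
      _ ≤ c (k + hIdx p c l) :=
        hc ⟨by omega, by omega⟩ ⟨by omega, by omega⟩ (Nat.add_le_add_right hkl _)

end HIndex

theorem stmt_1 (p : ℕ) (hp : 1 ≤ p) (c : ℕ → ℕ)
    (hmono : ∀ i j, 1 ≤ i → i ≤ j → j ≤ p → c j ≤ c i)
    (hpos : ∀ j, 1 ≤ j → j ≤ p → 1 ≤ c j)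
    (hzero : ∀ j, p < j → c j = 0)
    (k : ℕ) (hk : k + 2 ≤ p) :
    hIdx p c (k + 1) = hIdx p c k ↔ c (k + 1 + hIdx p c k) = hIdx p c k := by
  have hanti : AntitoneOn c (Set.Ioc 0 p) := fun i hi j hj hij => hmono i j hi.1 hij hj.2
  constructor
  · intro heq
    have hle : hIdx p c k ≤ c (k + 1 + hIdx p c k) := heq ▸ hIdx_le_apply
    exact (apply_succ_add_hIdx_le hzero).antisymm hle
  · intro hck
    exact (antitone_hIdx hanti k.le_succ).antisymm (le_hIdx_of_eq_zero hzero hck.ge)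
end

section
/- For every k with 0 ≤ k ≤ p − 2, if h_{k+1} = h_k − 1 and c(k+1) ≥ 2·h_k − 1, then e_k ≥ e_{k+1}. (Proposition 4.8(ii).) -/
/-!
When the h-index drops by one from order `k` to order `k + 1`, both cores end at the same index, so
the radicand `N - h²` loses exactly `c (k + 1) - (h_k² - (h_k - 1)²) = c (k + 1) - (2 h_k - 1)`.
-/

section ShiftedIndices

variable {p : ℕ} {c : ℕ → ℕ} {k : ℕ}

theorem hIdx_pos (hk : k < p) (hc : 1 ≤ c (k + 1)) : 0 < hIdx p c k := by
  have one_mem : 1 ∈ (Finset.Icc 1 (p - k)).filter (fun m => m ≤ c (k + m)) :=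
    Finset.mem_filter.mpr ⟨Finset.mem_Icc.mpr ⟨le_rfl, Nat.sub_pos_of_lt hk⟩, hc⟩
  exact Finset.le_sup (f := id) one_mem

theorem coreSum_eq_add_coreSum_succ (hh : hIdx p c k = hIdx p c (k + 1) + 1) :
    coreSum p c k = c (k + 1) + coreSum p c (k + 1) := by
  have core_end : k + hIdx p c k = k + 1 + hIdx p c (k + 1) := by omega
  rw [coreSum, coreSum, core_end, Finset.Icc_add_one_left_eq_Ioc (k + 1),
    Finset.add_sum_Ioc_eq_sum_Icc (Nat.le_add_right _ _)]

theorem coreSum_sub_hIdx_sq_eq (hh : hIdx p c k = hIdx p c (k + 1) + 1) :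
    (coreSum p c k : ℝ) - (hIdx p c k : ℝ) ^ 2 =
      (coreSum p c (k + 1) - (hIdx p c (k + 1) : ℝ) ^ 2) + (c (k + 1) - (2 * hIdx p c k - 1)) := by
  rw [coreSum_eq_add_coreSum_succ hh, hh]
  push_cast
  ring

theorem stmt_6_general (hh : hIdx p c k = hIdx p c (k + 1) + 1)
    (hc : 2 * hIdx p c k - 1 ≤ c (k + 1)) :
    eIdx p c (k + 1) ≤ eIdx p c k := by
  have hc_real : (2 * hIdx p c k - 1 : ℝ) ≤ c (k + 1) := by
    rw [sub_le_iff_le_add]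
    exact_mod_cast Nat.sub_le_iff_le_add.mp hc
  apply Real.sqrt_le_sqrt
  rw [coreSum_sub_hIdx_sq_eq hh]
  exact le_add_of_nonneg_right (sub_nonneg.mpr hc_real)

end ShiftedIndices

theorem stmt_6 (p : ℕ) (hp : 1 ≤ p) (c : ℕ → ℕ)
    (hmono : ∀ i j, 1 ≤ i → i ≤ j → j ≤ p → c j ≤ c i)
    (hpos : ∀ j, 1 ≤ j → j ≤ p → 1 ≤ c j)
    (hzero : ∀ j, p < j → c j = 0)
    (k : ℕ) (hk : k + 2 ≤ p)
    (hh : hIdx p c (k + 1) = hIdx p c k - 1)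
    (hc : 2 * hIdx p c k - 1 ≤ c (k + 1)) :
    eIdx p c (k + 1) ≤ eIdx p c k := by
  have hIdx_pos_k : 0 < hIdx p c k := hIdx_pos (by omega) (hpos _ (by omega) (by omega))
  exact stmt_6_general (by omega) hc
end
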